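/- arXiv:1109.1633 — 2 statements merged into one kernel-verified Lean document; each statement's English description precedes it below -/
import Mathlib

section
/- Let A be the 3×3 integer matrix [[2,1,1],[2,0,1],[1,1,1]], let B = A⁵ + [[0,1,−1],[0,1,−1],[0,1,−1]], and let μ be the largest real eigenvalue of B. Then for every integer a ≥ 2 there exist a constant C > 0 and M such that for all m ≥ M, f(a^m, a⁶) ≥ C · m^{1 + (1/5)·log₂ μ}. -/
/-- The continuant of a finite sequence of positive integers. -/
def continuant : List ℕ → ℕ
  | [] => 1
  | [a] => a
  | a :: b :: t => a * continuant (b :: t) + continuant t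

/-- `f d N` is the number of finite sequences of positive integers, all entries `< N`,
whose continuant equals `d`. -/
noncomputable def f (d N : ℕ) : ℕ :=
  Set.ncard {l : List ℕ | (∀ x ∈ l, 0 < x ∧ x < N) ∧ continuant l = d}

/-- `lam` is the largest real root of the real function `p`. -/
def IsGreatestRoot (p : ℝ → ℝ) (lam : ℝ) : Prop :=
  p lam = 0 ∧ ∀ x : ℝ, p x = 0 → x ≤ lam

/-!
If `v, c` has continuant `q`, then `v, c, x - 1, 1, c - 1, v.reverse` has continuant `x * q ^ 2`.
Different sequences, different `x`, and the two orientations of the middle block all give different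
results, so the number `T m` of sequences of continuant `a ^ m` with entries below `a ^ 6`
(and suitable ends) satisfies `T m ≥ 2 * ∑ T ((m - k) / 2)`, the sum being over the `k ≤ 6` of the
parity of `m`.

Put `s = m + 6` and consider lower bounds for `T` that depend only on whether `s` is even, `3` or
`1` modulo `4`. One step of the recursion, without the factor `2`, acts on them by the matrix `A`,
except that it gains a little at `s ≡ 3` modulo `8`. Unfolding the recursion from any `s`, one meets
the class of `3` modulo `8` after three or after four steps. Hence five steps gain at least the
correction `B - A ^ 5` on vectors that are decreasing and convex, and the `μ`-eigenvector of `B` is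
such a vector. Multiplying `s` by `32` thus multiplies the lower bound by
`2 ^ 5 * μ = 32 ^ (1 + (1 / 5) * logb 2 μ)`.
-/

lemma antitone_fin_three {α : Type*} [Preorder α] {v : Fin 3 → α} (h₀ : v 1 ≤ v 0)
    (h₁ : v 2 ≤ v 1) : Antitone v := by
  refine Fin.antitone_iff_succ_le.2 fun i => ?_
  fin_cases i
  · exact h₀
  · exact h₁

lemma pow_smul_le_pow_apply {R E : Type*} [CommSemiring R] [PartialOrder R] [AddCommMonoid E]
    [Preorder E] [IsOrderedRing R] [Module R E] [PosSMulMono R E] {F : Module.End R E}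
    (hF : Monotone F) {c : R} (hc : 0 ≤ c) {w : E} (hw : c • w ≤ F w) (n : ℕ) :
    c ^ n • w ≤ (F ^ n) w := by
  induction n with
  | zero => simp
  | succ n ih =>
    calc c ^ (n + 1) • w = c ^ n • c • w := by rw [pow_succ, mul_smul]
      _ ≤ c ^ n • F w := smul_le_smul_of_nonneg_left hw (pow_nonneg hc n)
      _ = F (c ^ n • w) := (map_smul F _ w).symm
      _ ≤ F ((F ^ n) w) := hF ih
      _ = (F ^ (n + 1)) w := by rw [pow_succ', Module.End.mul_apply]

lemma pow_rpow_one_add_inv_mul_logb {b x : ℝ} {k : ℕ} (hb : 0 < b) (hb₁ : b ≠ 1) (hx : 0 < x)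
    (hk : k ≠ 0) : (b ^ k) ^ (1 + 1 / (k : ℝ) * Real.logb b x) = b ^ k * x := by
  rw [Real.rpow_add (by positivity), Real.rpow_one, Real.rpow_mul (by positivity), one_div,
    Real.pow_rpow_inv_natCast hb.le hk, Real.rpow_logb hb hb₁ hx]

lemma mul_rpow_le_of_geometric_growth {T : ℕ → ℝ} {L b : ℕ} {c E : ℝ} (hL : 0 < L) (hb : 1 < b)
    (hc : 0 ≤ c) (hE : 0 ≤ E) (hT : ∀ n s, b ^ n * L ≤ s → ((b : ℝ) ^ E) ^ n * c ≤ T s)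
    {s : ℕ} (hs : L ≤ s) : c / ((L * b : ℕ) : ℝ) ^ E * (s : ℝ) ^ E ≤ T s := by
  set n := Nat.log b (s / L)
  have hlower : b ^ n * L ≤ s := (Nat.le_div_iff_mul_le hL).1 <|
    Nat.pow_log_le_self b (Nat.div_pos hs hL).ne'
  have hupper : s ≤ L * b * b ^ n := by
    have h : s / L < b ^ (n + 1) := Nat.lt_pow_succ_log_self hb _
    rw [Nat.div_lt_iff_lt_mul hL] at h
    exact h.le.trans_eq (by ring)
  calc c / ((L * b : ℕ) : ℝ) ^ E * (s : ℝ) ^ E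
      ≤ c / ((L * b : ℕ) : ℝ) ^ E * (((L * b : ℕ) : ℝ) * (b : ℝ) ^ n) ^ E := by
        gcongr
        exact_mod_cast hupper
    _ = ((b : ℝ) ^ E) ^ n * c := by
        rw [Real.mul_rpow (by positivity) (by positivity), Real.rpow_pow_comm (by positivity)]
        field_simp
    _ ≤ T s := hT n s hlower

/-! ### Continuants -/

/-- The matrix `[[a, 1], [1, 0]]` of one entry of a continuant. -/
def stepMatrix (a : ℕ) : Matrix (Fin 2) (Fin 2) ℕ := !![a, 1; 1, 0]

lemma continuant_eq_prod (l : List ℕ) : continuant l = (l.map stepMatrix).prod 0 0 := by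
  induction l using continuant.induct with
  | case1 => simp [continuant]
  | case2 a => simp [continuant, stepMatrix]
  | case3 a b t ih₁ ih₂ =>
    rw [continuant, ih₁, ih₂]
    simp only [List.map_cons, List.prod_cons]
    generalize (t.map stepMatrix).prod = P
    simp only [Matrix.mul_apply, Fin.sum_univ_two]
    simp [stepMatrix]

lemma transpose_stepMatrix (a : ℕ) : (stepMatrix a).transpose = stepMatrix a := by
  ext i j
  fin_cases i <;> fin_cases j <;> rfl

lemma prod_map_stepMatrix_reverse (l : List ℕ) :
    (l.reverse.map stepMatrix).prod = (l.map stepMatrix).prod.transpose := by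
  simp [Matrix.transpose_list_prod, Function.comp_def, transpose_stepMatrix]

lemma continuant_pos {l : List ℕ} (hl : ∀ x ∈ l, 0 < x) : 0 < continuant l := by
  induction l using continuant.induct with
  | case1 => simp [continuant]
  | case2 a => simpa [continuant] using hl
  | case3 a b t _ ih =>
    have ht : 0 < continuant t := ih fun x hx => hl x (by simp [hx])
    rw [continuant]
    omega

lemma length_le_continuant {l : List ℕ} (hl : ∀ x ∈ l, 0 < x) : l.length ≤ continuant l := by
  induction l using continuant.induct with
  | case1 => simp
  | case2 a => simpa [continuant, Nat.one_le_iff_ne_zero, Nat.pos_iff_ne_zero] using hl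
  | case3 a b t ih _ =>
    have hbt : (b :: t).length ≤ continuant (b :: t) := ih fun x hx => hl x (by simp [hx])
    have ht : 0 < continuant t := continuant_pos fun x hx => hl x (by simp [hx])
    have hmul : continuant (b :: t) ≤ a * continuant (b :: t) :=
      Nat.le_mul_of_pos_left _ (hl a (by simp))
    rw [continuant, List.length_cons]
    omega

lemma finite_setOf_continuant_eq (d N : ℕ) :
    {l : List ℕ | (∀ x ∈ l, 0 < x ∧ x < N) ∧ continuant l = d}.Finite := by
  refine ((List.finite_length_le (Fin N) d).image (List.map Fin.val)).subset ?_
  rintro l ⟨hl, rfl⟩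
  exact ⟨l.pmap Fin.mk fun x hx => (hl x hx).2,
    by simpa using length_le_continuant fun x hx => (hl x hx).1, by simp [List.map_pmap]⟩

/-! ### Folding -/

/-- The middle block of a folded sequence whose left half ended in `c`; the Boolean chooses between
a block and its reverse. For `x = 1` the block `c, x - 1, 1, c - 1` contains a zero, and is
contracted to `c + 1, c - 1`. -/
def foldCentre (x : ℕ) (s : Bool) (c : ℕ) : List ℕ :=
  if x = 1 then (if s then [c + 1, c - 1] else [c - 1, c + 1])
  else (if s then [c, x - 1, 1, c - 1] else [c - 1, 1, x - 1, c])

/-- Folding turns `v, c` into `v, foldCentre x s c, v.reverse`, and its continuant `q` into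
`x * q ^ 2`. -/
def fold (x : ℕ) (s : Bool) (u : List ℕ) : List ℕ :=
  u.dropLast ++ foldCentre x s (u.getLast?.getD 0) ++ u.dropLast.reverse

lemma fold_concat (x : ℕ) (s : Bool) (v : List ℕ) (c : ℕ) :
    fold x s (v ++ [c]) = v ++ foldCentre x s c ++ v.reverse := by
  simp [fold]

lemma continuant_fold_concat {x c : ℕ} (hx : 0 < x) (hc : 0 < c) (s : Bool) (v : List ℕ) :
    continuant (fold x s (v ++ [c])) = x * continuant (v ++ [c]) ^ 2 := by
  obtain ⟨y, rfl⟩ := Nat.exists_eq_add_one.2 hx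
  obtain ⟨c, rfl⟩ := Nat.exists_eq_add_one.2 hc
  rw [fold_concat]
  simp only [continuant_eq_prod, List.map_append, List.prod_append, prod_map_stepMatrix_reverse]
  -- With `(p, q)` the first row of `P`, both sides are `(y + 1) * ((c + 1) * p + q) ^ 2`.
  generalize (v.map stepMatrix).prod = P
  by_cases hy : y = 0 <;> cases s <;>
    simp [foldCentre, hy, stepMatrix, Matrix.mul_apply, Fin.sum_univ_two] <;> ring

lemma pos_and_lt_of_mem_foldCentre {N x c y : ℕ} {s : Bool} (hx : 0 < x) (hxN : x ≤ N)
    (hc : 2 ≤ c) (hcN : c + 2 ≤ N) (hy : y ∈ foldCentre x s c) : 0 < y ∧ y < N := by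
  by_cases hx₁ : x = 1 <;> cases s <;> simp [foldCentre, hx₁] at hy <;> omega

lemma eq_and_eq_of_append_append_reverse_eq {α : Type*} {v v' m m' : List α}
    (hm : m.length = m'.length) (h : v ++ m ++ v.reverse = v' ++ m' ++ v'.reverse) :
    v = v' ∧ m = m' := by
  have hlen := congrArg List.length h
  simp only [List.length_append, List.length_reverse] at hlen
  exact List.append_inj (List.append_inj h (by simp; omega)).1 (by omega)

/-- Around the centre, a contracted fold reads `d, _, _, d`, whereas the outer entries of an
uncontracted block differ by one. -/
lemma fold_concat_ne_fold_one {x c : ℕ} (hx : x ≠ 1) (hc : 0 < c) (s s' : Bool) (v : List ℕ)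
    {v' : List ℕ} (hv' : v' ≠ []) (c' : ℕ) :
    fold x s (v ++ [c]) ≠ fold 1 s' (v' ++ [c']) := by
  intro h
  obtain ⟨w, d, rfl⟩ := List.eq_nil_or_concat v' |>.resolve_left hv'
  have hsandwich : v ++ foldCentre x s c ++ v.reverse =
      w ++ ([d] ++ foldCentre 1 s' c' ++ [d]) ++ w.reverse := by
    rw [fold_concat, fold_concat] at h
    simpa using h
  have hcentre := (eq_and_eq_of_append_append_reverse_eq
    (by cases s <;> cases s' <;> simp [foldCentre, hx]) hsandwich).2
  cases s <;> cases s' <;> simp [foldCentre, hx] at hcentre <;> omega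

lemma foldCentre_inj {x x' c c' : ℕ} {s s' : Bool} (hx : 0 < x) (hx' : 0 < x') (hc : 0 < c)
    (hc' : 0 < c') (hxx' : x = 1 ↔ x' = 1) (h : foldCentre x s c = foldCentre x' s' c') :
    x = x' ∧ s = s' ∧ c = c' := by
  by_cases hx₁ : x = 1
  · cases s <;> cases s' <;> simp [foldCentre, hx₁, hxx'.1 hx₁] at h ⊢ <;> omega
  · have hx₁' : x' ≠ 1 := mt hxx'.2 hx₁
    cases s <;> cases s' <;> simp [foldCentre, hx₁, hx₁'] at h ⊢ <;> omega

lemma fold_concat_inj {x x' c c' : ℕ} {s s' : Bool} {v v' : List ℕ} (hx : 0 < x) (hx' : 0 < x')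
    (hc : 0 < c) (hc' : 0 < c') (hv : v ≠ []) (hv' : v' ≠ [])
    (h : fold x s (v ++ [c]) = fold x' s' (v' ++ [c'])) :
    x = x' ∧ s = s' ∧ v ++ [c] = v' ++ [c'] := by
  have hxx' : x = 1 ↔ x' = 1 := by
    constructor
    · rintro rfl
      by_contra hne
      exact fold_concat_ne_fold_one hne hc' s' s v' hv c h.symm
    · rintro rfl
      by_contra hne
      exact fold_concat_ne_fold_one hne hc s s' v hv' c' h
  have hlen : (foldCentre x s c).length = (foldCentre x' s' c').length := by
    by_cases hx₁ : x = 1 <;> cases s <;> cases s' <;> simp [foldCentre, hx₁, ← hxx']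
  rw [fold_concat, fold_concat] at h
  obtain ⟨rfl, hcentre⟩ := eq_and_eq_of_append_append_reverse_eq hlen h
  obtain ⟨rfl, rfl, rfl⟩ := foldCentre_inj hx hx' hc hc' hxx' hcentre
  exact ⟨rfl, rfl, rfl⟩

/-- The sequences counted by `f d N` of length at least two whose two end entries lie in
`[2, N - 2]`. This condition on the ends makes the family stable under folding. -/
def foldableSeqs (N d : ℕ) : Set (List ℕ) :=
  {l | ∃ b w c, l = b :: w ++ [c] ∧ (2 ≤ b ∧ b + 2 ≤ N) ∧ (2 ≤ c ∧ c + 2 ≤ N) ∧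
    (∀ x ∈ w, 0 < x ∧ x < N) ∧ continuant l = d}

lemma foldableSeqs_subset (N d : ℕ) :
    foldableSeqs N d ⊆ {l | (∀ x ∈ l, 0 < x ∧ x < N) ∧ continuant l = d} := by
  rintro l ⟨b, w, c, rfl, hb, hc, hw, hd⟩
  refine ⟨fun x hx => ?_, hd⟩
  simp only [List.cons_append, List.mem_cons, List.mem_append, List.not_mem_nil, or_false] at hx
  rcases hx with rfl | hx | rfl
  · omega
  · exact hw x hx
  · omega

lemma finite_foldableSeqs (N d : ℕ) : (foldableSeqs N d).Finite :=
  (finite_setOf_continuant_eq d N).subset (foldableSeqs_subset N d)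

lemma ncard_foldableSeqs_le_f (N d : ℕ) : (foldableSeqs N d).ncard ≤ f d N :=
  Set.ncard_le_ncard (foldableSeqs_subset N d) (finite_setOf_continuant_eq d N)

lemma fold_mem_foldableSeqs {N d x : ℕ} (hx : 0 < x) (hxN : x ≤ N) (s : Bool) {u : List ℕ}
    (hu : u ∈ foldableSeqs N d) : fold x s u ∈ foldableSeqs N (x * d ^ 2) := by
  obtain ⟨b, w, c, rfl, hb, hc, hw, rfl⟩ := hu
  refine ⟨b, w ++ foldCentre x s c ++ w.reverse, b, ?_, hb, hb, fun y hy => ?_,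
    continuant_fold_concat hx (by omega) s _⟩
  · rw [fold_concat]
    simp
  simp only [List.mem_append, List.mem_reverse] at hy
  rcases hy with (hy | hy) | hy
  · exact hw y hy
  · exact pos_and_lt_of_mem_foldCentre hx hxN hc.1 hc.2 hy
  · exact hw y hy

lemma fold_inj_of_mem_foldableSeqs {N d d' x x' : ℕ} {s s' : Bool} {u u' : List ℕ} (hx : 0 < x)
    (hx' : 0 < x') (hu : u ∈ foldableSeqs N d) (hu' : u' ∈ foldableSeqs N d')
    (h : fold x s u = fold x' s' u') : x = x' ∧ s = s' ∧ u = u' := by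
  obtain ⟨b, w, c, rfl, -, hc, -⟩ := hu
  obtain ⟨b', w', c', rfl, -, hc', -⟩ := hu'
  exact fold_concat_inj hx hx' (by omega) (by omega) (by simp) (by simp) h

lemma two_mul_sum_ncard_foldableSeqs_le {ι : Type*} {N D : ℕ} {J : Finset ι} {x d : ι → ℕ}
    (hinj : Set.InjOn x J) (hpos : ∀ i ∈ J, 0 < x i) (hle : ∀ i ∈ J, x i ≤ N)
    (hD : ∀ i ∈ J, x i * d i ^ 2 = D) :
    2 * ∑ i ∈ J, (foldableSeqs N (d i)).ncard ≤ (foldableSeqs N D).ncard := by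
  have hcard : ((J ×ˢ (Finset.univ : Finset Bool)).sigma
      fun p => (finite_foldableSeqs N (d p.1)).toFinset).card ≤
        (finite_foldableSeqs N D).toFinset.card := by
    apply Finset.card_le_card_of_injOn fun q => fold (x q.1.1) q.1.2 q.2
    · rintro ⟨⟨i, s⟩, u⟩ hq
      obtain ⟨hi, hu⟩ : i ∈ J ∧ u ∈ foldableSeqs N (d i) := by simpa using hq
      simpa [hD i hi] using fold_mem_foldableSeqs (hpos i hi) (hle i hi) s hu
    · rintro ⟨⟨i, s⟩, u⟩ hq ⟨⟨i', s'⟩, u'⟩ hq' h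
      obtain ⟨hi, hu⟩ : i ∈ J ∧ u ∈ foldableSeqs N (d i) := by simpa using hq
      obtain ⟨hi', hu'⟩ : i' ∈ J ∧ u' ∈ foldableSeqs N (d i') := by simpa using hq'
      obtain ⟨hx, rfl, rfl⟩ := fold_inj_of_mem_foldableSeqs (hpos i hi) (hpos i' hi') hu hu' h
      obtain rfl := hinj hi hi' hx
      rfl
  simpa [Finset.sum_product, ← Set.ncard_eq_toFinset_card, ← Finset.mul_sum] using hcard

/-- The witness is the fold of `[a]`; for `a = 2` its last two entries `1, a - 1` are contracted
to `2`. -/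
lemma foldableSeqs_mul_sq_nonempty {N a x : ℕ} (ha : 2 ≤ a) (haN : a + 2 ≤ N) (hx : 2 ≤ x)
    (hxN : x ≤ N) : (foldableSeqs N (x * a ^ 2)).Nonempty := by
  obtain ⟨y, rfl⟩ := Nat.exists_eq_add_one.2 (show 0 < x by omega)
  rcases ha.eq_or_lt with rfl | ha
  · refine ⟨[2, y, 2], 2, [y], 2, rfl, by omega, by omega, ?_, ?_⟩
    · simp only [List.mem_singleton, forall_eq]
      omega
    · simp only [continuant]
      ring
  · obtain ⟨c, rfl⟩ := Nat.exists_eq_add_one.2 (show 0 < a by omega)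
    refine ⟨[c + 1, y, 1, c], c + 1, [y, 1], c, rfl, by omega, by omega, ?_, ?_⟩
    · simp only [List.mem_cons, List.not_mem_nil, or_false, forall_eq_or_imp, forall_eq]
      omega
    · simp only [continuant]
      ring

/-! ### The averaged recursion -/

/-- The operator summing `w t` over the `t` with `s ≤ 2 * t ≤ s + r`: the right-hand side of the
recursion that folding gives for the numbers `shiftedCount a r s`. -/
def branchSum (r : ℕ) : Module.End ℝ (ℕ → ℝ) where
  toFun w s := ∑ t ∈ Finset.Icc ((s + 1) / 2) ((s + r) / 2), w t
  map_add' w w' := by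
    ext s
    simp [Finset.sum_add_distrib]
  map_smul' c w := by
    ext s
    simp [Finset.mul_sum]

lemma branchSum_apply (r : ℕ) (w : ℕ → ℝ) (s : ℕ) :
    branchSum r w s = ∑ t ∈ Finset.Icc ((s + 1) / 2) ((s + r) / 2), w t := rfl

lemma monotone_branchSum (r : ℕ) : Monotone (branchSum r) :=
  fun _ _ h s =>
  Finset.sum_le_sum (s := Finset.Icc ((s + 1) / 2) ((s + r) / 2)) fun t _ => h t

lemma monotone_branchSum_pow (r n : ℕ) : Monotone (branchSum r ^ n) := by
  rw [Module.End.coe_pow]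
  exact (monotone_branchSum r).iterate n

lemma branchSum_pow_nonneg (r n : ℕ) {w : ℕ → ℝ} (hw : 0 ≤ w) : 0 ≤ (branchSum r ^ n) w := by
  simpa using monotone_branchSum_pow r n hw

lemma le_branchSum_pow {r n s t : ℕ} {w : ℕ → ℝ} (hw : 0 ≤ w) (hst : s ≤ 2 ^ n * t)
    (hts : 2 ^ n * t + r ≤ s + 2 ^ n * r) : w t ≤ (branchSum r ^ n) w s := by
  induction n generalizing s with
  | zero =>
    obtain rfl : s = t := by omega
    simp
  | succ n ih =>
    obtain ⟨q, hsq, hqs, hqt, htq⟩ : ∃ q, s ≤ 2 * q ∧ 2 * q ≤ s + r ∧ q ≤ 2 ^ n * t ∧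
        2 ^ n * t + r ≤ q + 2 ^ n * r := by
      have hr : r ≤ 2 ^ n * r := Nat.le_mul_of_pos_left r (by positivity)
      have hr₀ : r = 0 → 2 ^ n * r = 0 := by simp +contextual
      rw [pow_succ', mul_assoc, mul_assoc] at *
      exact ⟨max ((s + 1) / 2) (2 ^ n * t + r - 2 ^ n * r), by omega, by omega, by omega, by omega⟩
    rw [pow_succ', Module.End.mul_apply, branchSum_apply]
    exact (ih hqt htq).trans <| Finset.single_le_sum (f := (branchSum r ^ n) w)
      (fun i _ => branchSum_pow_nonneg r n hw i) (Finset.mem_Icc.2 (by omega))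

lemma two_pow_mul_branchSum_pow_le {r L : ℕ} {T w : ℕ → ℝ}
    (hT : ∀ s, 2 * L ≤ s → 2 * branchSum r T s ≤ T s) (hw : ∀ s, L ≤ s → w s ≤ T s) (n : ℕ)
    {s : ℕ} (hs : 2 ^ n * L ≤ s) : 2 ^ n * (branchSum r ^ n) w s ≤ T s := by
  induction n generalizing s with
  | zero => simpa using hw s (by simpa using hs)
  | succ n ih =>
    rw [pow_succ', mul_assoc] at hs
    have hL : L ≤ 2 ^ n * L := Nat.le_mul_of_pos_left L (by positivity)
    calc 2 ^ (n + 1) * (branchSum r ^ (n + 1)) w s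
        = 2 * ∑ t ∈ Finset.Icc ((s + 1) / 2) ((s + r) / 2), 2 ^ n * (branchSum r ^ n) w t := by
          rw [← Finset.mul_sum, pow_succ' (branchSum r), Module.End.mul_apply, branchSum_apply]
          ring
      _ ≤ 2 * branchSum r T s := by
          refine mul_le_mul_of_nonneg_left (Finset.sum_le_sum fun t ht => ih ?_) zero_le_two
          have := (Finset.mem_Icc.1 ht).1
          omega
      _ ≤ T s := hT s (by omega)

/-- The number of foldable sequences of continuant `a ^ m`, as a function of `s = m + r`: the shift
turns the range `m - r ≤ 2 * j ≤ m` of the exponents that fold to `m` into `s ≤ 2 * t ≤ s + r`.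
Only the values at `s ≥ r` are meaningful. -/
noncomputable def shiftedCount (a r s : ℕ) : ℝ :=
  (foldableSeqs (a ^ r) (a ^ (s - r))).ncard

lemma two_mul_branchSum_shiftedCount_le {a r s : ℕ} (ha : 2 ≤ a) (hs : 2 * r ≤ s) :
    2 * branchSum r (shiftedCount a r) s ≤ shiftedCount a r s := by
  have hcount := two_mul_sum_ncard_foldableSeqs_le (N := a ^ r) (D := a ^ (s - r))
    (J := Finset.Icc ((s + 1) / 2) ((s + r) / 2)) (x := fun t => a ^ (s + r - 2 * t))
    (d := fun t => a ^ (t - r)) ?_ (fun _ _ => by positivity) ?_ ?_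
  · simp only [branchSum_apply, shiftedCount]
    exact_mod_cast hcount
  · intro t ht t' ht' h
    have := Nat.pow_right_injective ha h
    simp only [Finset.coe_Icc, Set.mem_Icc] at ht ht'
    omega
  · intro t ht
    rw [Finset.mem_Icc] at ht
    exact Nat.pow_le_pow_right (by omega) (by omega)
  · intro t ht
    rw [Finset.mem_Icc] at ht
    rw [← pow_mul, ← pow_add]
    congr 1
    omega

lemma add_two_le_pow {a r : ℕ} (ha : 2 ≤ a) (hr : 2 ≤ r) : a + 2 ≤ a ^ r :=
  calc a + 2 ≤ a ^ 2 := by nlinarith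
    _ ≤ a ^ r := Nat.pow_le_pow_right (by omega) hr

lemma one_le_shiftedCount {a r : ℕ} (ha : 2 ≤ a) (hr : 3 ≤ r) {s : ℕ} (hs : r + 3 ≤ s) :
    1 ≤ shiftedCount a r s := by
  induction s using Nat.strong_induction_on with
  | _ s ih =>
    rcases le_or_gt s (2 * r + 2) with hsr | hsr
    · obtain ⟨k, hk, hkr, hks⟩ : ∃ k, k ≠ 0 ∧ k ≤ r ∧ s - r = k + 2 :=
        ⟨s - r - 2, by omega, by omega, by omega⟩
      have hne : (foldableSeqs (a ^ r) (a ^ (s - r))).Nonempty := by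
        rw [hks, pow_add]
        exact foldableSeqs_mul_sq_nonempty ha (add_two_le_pow ha (by omega))
          (ha.trans (Nat.le_self_pow hk a)) (Nat.pow_le_pow_right (by omega) hkr)
      exact Nat.one_le_cast.2 ((Set.ncard_pos (finite_foldableSeqs _ _)).2 hne)
    · have hchild : 1 ≤ shiftedCount a r ((s + r) / 2) := ih _ (by omega) (by omega)
      have hle : shiftedCount a r ((s + r) / 2) ≤ branchSum r (shiftedCount a r) s := by
        simpa using le_branchSum_pow (r := r) (n := 1) (s := s) (t := (s + r) / 2)
          (w := shiftedCount a r) (fun i => Nat.cast_nonneg _) (by omega) (by omega)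
      linarith [two_mul_branchSum_shiftedCount_le ha (show 2 * r ≤ s by omega)]

/-! ### Residue classes -/

section ResidueClasses

open scoped Matrix

/-- The class of `s = m + 6`: `0` for `m` even, `1` for `m ≡ 1` and `2` for `m ≡ 3` modulo `4`. -/
def oddClass (s : ℕ) : Fin 3 := if s % 4 = 3 then 1 else if s % 4 = 1 then 2 else 0

/-- Among `s ≡ 3` modulo `4`, those at which one more term of `branchSum 6` has class `1` instead
of class `2`. -/
noncomputable def defect : ℕ → ℝ := Set.indicator {s | s % 8 = 3} 1

lemma defect_nonneg : 0 ≤ defect := Set.indicator_nonneg fun _ _ => zero_le_one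

/-- The matrix of `branchSum 6` on functions of `oddClass`, up to a multiple of `defect`; see
`branchSum_comp_oddClass`. -/
def branchMatrix : Matrix (Fin 3) (Fin 3) ℝ := !![2, 1, 1; 2, 0, 1; 1, 1, 1]

lemma branchMatrix_mulVec (v : Fin 3 → ℝ) :
    branchMatrix *ᵥ v = ![2 * v 0 + v 1 + v 2, 2 * v 0 + v 2, v 0 + v 1 + v 2] := by
  ext i
  fin_cases i <;> simp [branchMatrix, Matrix.mulVec, dotProduct, Fin.sum_univ_three]

lemma branchSum_six_two_mul (w : ℕ → ℝ) (u : ℕ) :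
    branchSum 6 w (2 * u) = w u + w (u + 1) + w (u + 2) + w (u + 3) := by
  rw [branchSum_apply, show (2 * u + 1) / 2 = u by omega, show (2 * u + 6) / 2 = u + 3 by omega]
  rw [Finset.sum_Icc_succ_top (by omega), Finset.sum_Icc_succ_top (by omega),
    Finset.sum_Icc_succ_top (by omega), Finset.Icc_self, Finset.sum_singleton]

lemma branchSum_six_two_mul_add_one (w : ℕ → ℝ) (u : ℕ) :
    branchSum 6 w (2 * u + 1) = w (u + 1) + w (u + 2) + w (u + 3) := by
  rw [branchSum_apply, show (2 * u + 1 + 1) / 2 = u + 1 by omega,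
    show (2 * u + 1 + 6) / 2 = u + 3 by omega]
  rw [Finset.sum_Icc_succ_top (by omega), Finset.sum_Icc_succ_top (by omega), Finset.Icc_self,
    Finset.sum_singleton]

lemma branchSum_comp_oddClass (v : Fin 3 → ℝ) :
    branchSum 6 (v ∘ oddClass) = (branchMatrix *ᵥ v) ∘ oddClass +
      (v 1 - v 2) • defect := by
  ext s
  rw [branchMatrix_mulVec]
  obtain ⟨u, rfl | rfl⟩ := s.even_or_odd'
  · have hmod₄ : 2 * u % 4 = 2 * (u % 4) % 4 := by omega
    have hmod₈ : 2 * u % 8 = 2 * (u % 4) := by omega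
    rw [branchSum_six_two_mul]
    have hu : u % 4 < 4 := Nat.mod_lt u (by norm_num)
    interval_cases hk : u % 4 <;> simp [oddClass, defect, Nat.add_mod, hk, hmod₄, hmod₈] <;> ring
  · have hmod₄ : (2 * u + 1) % 4 = (2 * (u % 4) + 1) % 4 := by omega
    have hmod₈ : (2 * u + 1) % 8 = 2 * (u % 4) + 1 := by omega
    rw [branchSum_six_two_mul_add_one]
    have hu : u % 4 < 4 := Nat.mod_lt u (by norm_num)
    interval_cases hk : u % 4 <;>
      simp [oddClass, defect, Nat.add_mod u, hk, hmod₄, hmod₈] <;> ring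

/-- The descendants of `s` after `n` steps are the integers in `[s / 2 ^ n, (s - 6) / 2 ^ n + 6]`,
and for `n = 3` and `n = 4` these intervals cannot both miss the class of `3` modulo `8`. -/
lemma exists_mod_eight_eq_three (s : ℕ) : ∃ t, t % 8 = 3 ∧
    (s ≤ 2 ^ 3 * t ∧ 2 ^ 3 * t + 6 ≤ s + 2 ^ 3 * 6 ∨
      s ≤ 2 ^ 4 * t ∧ 2 ^ 4 * t + 6 ≤ s + 2 ^ 4 * 6) := by
  set p := (s + 7) / 8
  set q := (s + 15) / 16
  by_cases h : 16 * (q + (11 - q % 8) % 8) ≤ s + 90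
  · exact ⟨q + (11 - q % 8) % 8, by omega, Or.inr (by omega)⟩
  · exact ⟨p + (11 - p % 8) % 8, by omega, Or.inl (by omega)⟩

lemma one_le_branchSum_pow_defect_add (s : ℕ) :
    1 ≤ (branchSum 6 ^ 3) defect s + (branchSum 6 ^ 4) defect s := by
  obtain ⟨t, ht, h⟩ := exists_mod_eight_eq_three s
  have hone : defect t = 1 := Set.indicator_of_mem ht 1
  rcases h with h | h
  · calc 1 ≤ (branchSum 6 ^ 3) defect s := hone ▸ le_branchSum_pow defect_nonneg h.1 h.2
      _ ≤ _ := le_add_of_nonneg_right (branchSum_pow_nonneg 6 4 defect_nonneg s)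
  · calc 1 ≤ (branchSum 6 ^ 4) defect s := hone ▸ le_branchSum_pow defect_nonneg h.1 h.2
      _ ≤ _ := le_add_of_nonneg_left (branchSum_pow_nonneg 6 3 defect_nonneg s)

lemma branchMatrix_mulVec_nonneg {v : Fin 3 → ℝ} (hv : 0 ≤ v) : 0 ≤ branchMatrix *ᵥ v := by
  have h₀ : 0 ≤ v 0 := hv 0
  have h₁ : 0 ≤ v 1 := hv 1
  have h₂ : 0 ≤ v 2 := hv 2
  rw [branchMatrix_mulVec]
  intro i
  fin_cases i <;> simp <;> linarith

lemma antitone_branchMatrix_mulVec {v : Fin 3 → ℝ} (hv : 0 ≤ v) (hanti : Antitone v) :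
    Antitone (branchMatrix *ᵥ v) := by
  have h₀ : v 1 ≤ v 0 := hanti (by decide)
  have h₁ : 0 ≤ v 1 := hv 1
  rw [branchMatrix_mulVec]
  apply antitone_fin_three <;> simp <;> linarith

lemma branchMatrix_pow_mulVec_comp_oddClass_le {v : Fin 3 → ℝ} (hv : 0 ≤ v) (hanti : Antitone v)
    (n : ℕ) : (branchMatrix ^ n *ᵥ v) ∘ oddClass ≤ (branchSum 6 ^ n) (v ∘ oddClass) := by
  induction n generalizing v with
  | zero => simp
  | succ n ih =>
    have hstep : (branchMatrix *ᵥ v) ∘ oddClass ≤ branchSum 6 (v ∘ oddClass) := by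
      rw [branchSum_comp_oddClass]
      have hdiff : 0 ≤ v 1 - v 2 := sub_nonneg.2 (hanti (by decide))
      exact le_add_of_nonneg_right (smul_nonneg hdiff defect_nonneg)
    calc (branchMatrix ^ (n + 1) *ᵥ v) ∘ oddClass
        = (branchMatrix ^ n *ᵥ branchMatrix *ᵥ v) ∘ oddClass := by
          rw [pow_succ, Matrix.mulVec_mulVec]
      _ ≤ (branchSum 6 ^ n) ((branchMatrix *ᵥ v) ∘ oddClass) :=
          ih (branchMatrix_mulVec_nonneg hv) (antitone_branchMatrix_mulVec hv hanti)
      _ ≤ (branchSum 6 ^ n) (branchSum 6 (v ∘ oddClass)) := monotone_branchSum_pow 6 n hstep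
      _ = (branchSum 6 ^ (n + 1)) (v ∘ oddClass) := by rw [pow_succ, Module.End.mul_apply]

/-- The lower bound for five steps of `branchSum 6`: the power of `branchMatrix`, corrected by the
defects that every `s` meets on the way; see `fiveStepMatrix_mulVec_comp_oddClass_le`. -/
def fiveStepMatrix : Matrix (Fin 3) (Fin 3) ℝ :=
  branchMatrix ^ 5 + !![0, 1, -1; 0, 1, -1; 0, 1, -1]

lemma fiveStepMatrix_mulVec (v : Fin 3 → ℝ) : fiveStepMatrix *ᵥ v =
    branchMatrix ^ 3 *ᵥ branchMatrix *ᵥ branchMatrix *ᵥ v + fun _ => v 1 - v 2 := by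
  rw [fiveStepMatrix, Matrix.add_mulVec, Matrix.mulVec_mulVec, Matrix.mulVec_mulVec,
    ← pow_succ, ← pow_succ]
  congr 1
  ext i
  fin_cases i <;> simp [Matrix.mulVec, dotProduct, Fin.sum_univ_three] <;> ring

lemma branchSum_pow_five_comp_oddClass (v : Fin 3 → ℝ) :
    (branchSum 6 ^ 5) (v ∘ oddClass) =
      (branchSum 6 ^ 3) ((branchMatrix *ᵥ branchMatrix *ᵥ v) ∘ oddClass) +
        (v 0 - v 1) • (branchSum 6 ^ 3) defect + (v 1 - v 2) • (branchSum 6 ^ 4) defect := by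
  have hdiff : (branchMatrix *ᵥ v) 1 - (branchMatrix *ᵥ v) 2 = v 0 - v 1 := by
    rw [branchMatrix_mulVec]
    simp
    ring
  rw [pow_succ, Module.End.mul_apply, branchSum_comp_oddClass, map_add, map_smul,
    pow_succ _ 3, Module.End.mul_apply, branchSum_comp_oddClass, hdiff, map_add, map_smul,
    Module.End.mul_apply]

/-- The correction to `branchMatrix ^ 5` collects the defects of the first two steps, of which the
second is at least as large as the first by convexity of `v`. -/
lemma fiveStepMatrix_mulVec_comp_oddClass_le {v : Fin 3 → ℝ} (hv : 0 ≤ v) (hanti : Antitone v)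
    (hconvex : v 1 - v 2 ≤ v 0 - v 1) :
    (fiveStepMatrix *ᵥ v) ∘ oddClass ≤ (branchSum 6 ^ 5) (v ∘ oddClass) := by
  intro s
  have hv₁ : 0 ≤ branchMatrix *ᵥ v := branchMatrix_mulVec_nonneg hv
  have hmain := branchMatrix_pow_mulVec_comp_oddClass_le (branchMatrix_mulVec_nonneg hv₁)
    (antitone_branchMatrix_mulVec hv₁ (antitone_branchMatrix_mulVec hv hanti)) 3 s
  have hdefect : v 1 - v 2 ≤
      (v 0 - v 1) * (branchSum 6 ^ 3) defect s + (v 1 - v 2) * (branchSum 6 ^ 4) defect s :=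
    calc v 1 - v 2
        ≤ (v 1 - v 2) * ((branchSum 6 ^ 3) defect s + (branchSum 6 ^ 4) defect s) :=
          le_mul_of_one_le_right (sub_nonneg.2 (hanti (by decide)))
            (one_le_branchSum_pow_defect_add s)
      _ ≤ _ := by
          rw [mul_add]
          gcongr
          exact branchSum_pow_nonneg 6 3 defect_nonneg s
  rw [branchSum_pow_five_comp_oddClass, fiveStepMatrix_mulVec]
  simp only [Function.comp_apply, Pi.add_apply, Pi.smul_apply, smul_eq_mul] at hmain ⊢
  linarith

/-! ### The eigenvalue -/

lemma fiveStepMatrix_eq :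
    fiveStepMatrix = !![293, 134, 170; 228, 104, 132; 209, 96, 121] := by
  ext i j
  fin_cases i <;> fin_cases j <;> simp [fiveStepMatrix, branchMatrix, pow_succ] <;> norm_num

lemma isRoot_charpoly_fiveStepMatrix_iff (x : ℝ) :
    fiveStepMatrix.charpoly.IsRoot x ↔ x ^ 3 - 518 * x ^ 2 - 245 * x - 56 = 0 := by
  rw [Polynomial.IsRoot, Matrix.eval_charpoly, fiveStepMatrix_eq, Matrix.det_fin_three]
  simp
  ring_nf

lemma lt_of_isRoot_charpoly_fiveStepMatrix {μ : ℝ} (hμ : fiveStepMatrix.charpoly.IsRoot μ) :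
    518 < μ := by
  rw [isRoot_charpoly_fiveStepMatrix_iff] at hμ
  by_contra! hle
  nlinarith [mul_nonneg (sq_nonneg μ) (sub_nonneg.2 hle), sq_nonneg (μ + 1 / 4)]

lemma exists_eigenvector_fiveStepMatrix {μ : ℝ} (hμ : fiveStepMatrix.charpoly.IsRoot μ) :
    ∃ v : Fin 3 → ℝ, fiveStepMatrix *ᵥ v = μ • v ∧ Antitone v ∧ v 1 - v 2 ≤ v 0 - v 1 ∧
      0 < v 2 ∧ v 0 ≤ 1 := by
  have hlt := lt_of_isRoot_charpoly_fiveStepMatrix hμ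
  rw [isRoot_charpoly_fiveStepMatrix_iff] at hμ
  -- the first column of the adjugate of `μ - fiveStepMatrix`
  set u : Fin 3 → ℝ := ![μ ^ 2 - 225 * μ - 88, 228 * μ, 209 * μ + 152] with hu
  have hu₀ : 0 < u 0 := by
    simp only [hu, Matrix.cons_val]
    nlinarith
  have heigen : fiveStepMatrix *ᵥ u = μ • u := by
    rw [fiveStepMatrix_eq]
    ext i
    fin_cases i <;> simp [hu, Matrix.mulVec, dotProduct, Fin.sum_univ_three]
    · linear_combination (-1) * hμ
    · ring
    · ring
  have hanti : Antitone u := by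
    apply antitone_fin_three <;> simp only [hu, Matrix.cons_val] <;> nlinarith
  have hconvex : u 1 - u 2 ≤ u 0 - u 1 := by
    simp only [hu, Matrix.cons_val]
    nlinarith
  have hu₂ : 0 < u 2 := by
    simp only [hu, Matrix.cons_val]
    linarith
  have hinv : 0 ≤ (u 0)⁻¹ := (inv_pos.2 hu₀).le
  refine ⟨(u 0)⁻¹ • u, ?_, fun _ _ h => mul_le_mul_of_nonneg_left (hanti h) hinv, ?_, ?_, ?_⟩
  · rw [Matrix.mulVec_smul, heigen, smul_comm]
  · simpa only [Pi.smul_apply, smul_eq_mul, mul_sub] using mul_le_mul_of_nonneg_left hconvex hinv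
  · exact mul_pos (inv_pos.2 hu₀) hu₂
  · exact (inv_mul_cancel₀ hu₀.ne').le

lemma pow_mul_le_shiftedCount {a : ℕ} (ha : 2 ≤ a) {ρ : ℝ} (hρ : 0 ≤ ρ) {v : Fin 3 → ℝ}
    (heigen : fiveStepMatrix *ᵥ v = ρ • v) (hanti : Antitone v) (hconvex : v 1 - v 2 ≤ v 0 - v 1)
    (hpos : 0 ≤ v 2) (hone : v 0 ≤ 1) {n s : ℕ} (hs : 32 ^ n * 9 ≤ s) :
    (32 * ρ) ^ n * v 2 ≤ shiftedCount a 6 s := by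
  have hv : 0 ≤ v := fun i => hpos.trans (hanti (Fin.le_last i))
  have hstep : ρ • (v ∘ oddClass) ≤ (branchSum 6 ^ 5) (v ∘ oddClass) :=
    calc ρ • (v ∘ oddClass) = (fiveStepMatrix *ᵥ v) ∘ oddClass := by rw [heigen]; rfl
      _ ≤ _ := fiveStepMatrix_mulVec_comp_oddClass_le hv hanti hconvex
  have hiter : ρ ^ n * v (oddClass s) ≤ (branchSum 6 ^ (5 * n)) (v ∘ oddClass) s := by
    rw [pow_mul]
    exact pow_smul_le_pow_apply (monotone_branchSum_pow 6 5) hρ hstep n s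
  have hbase : ∀ t, 9 ≤ t → (v ∘ oddClass) t ≤ shiftedCount a 6 t := fun t ht =>
    ((hanti (Fin.zero_le _)).trans hone).trans (one_le_shiftedCount ha (by norm_num) ht)
  calc (32 * ρ) ^ n * v 2 ≤ (32 * ρ) ^ n * v (oddClass s) := by
        gcongr
        exact hanti (Fin.le_last _)
    _ = 2 ^ (5 * n) * (ρ ^ n * v (oddClass s)) := by
        rw [mul_pow, pow_mul, mul_assoc]
        norm_num
    _ ≤ 2 ^ (5 * n) * (branchSum 6 ^ (5 * n)) (v ∘ oddClass) s := by gcongr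
    _ ≤ shiftedCount a 6 s :=
        two_pow_mul_branchSum_pow_le (fun t ht => two_mul_branchSum_shiftedCount_le ha (by omega))
          hbase (5 * n) (by rwa [pow_mul])

end ResidueClasses

theorem theorem3_general {μ : ℝ} (hμ : fiveStepMatrix.charpoly.IsRoot μ) :
    ∃ C : ℝ, 0 < C ∧ ∀ a : ℕ, 2 ≤ a → ∀ m : ℕ, 3 ≤ m →
      C * (m : ℝ) ^ (1 + (1 / 5 : ℝ) * Real.logb 2 μ) ≤ (f (a ^ m) (a ^ 6) : ℝ) := by
  obtain ⟨v, heigen, hanti, hconvex, hpos, hone⟩ := exists_eigenvector_fiveStepMatrix hμ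
  have hμ₅₁₈ : 518 < μ := lt_of_isRoot_charpoly_fiveStepMatrix hμ
  set E := 1 + (1 / 5 : ℝ) * Real.logb 2 μ
  have hE : 0 ≤ E := by
    have : 0 ≤ Real.logb 2 μ := Real.logb_nonneg one_lt_two (by linarith)
    positivity
  have h32 : ((32 : ℕ) : ℝ) ^ E = 32 * μ := by
    have := pow_rpow_one_add_inv_mul_logb (b := 2) (x := μ) (k := 5) two_pos (by norm_num)
      (by linarith) (by norm_num)
    norm_num at this ⊢
    exact this
  refine ⟨v 2 / ((9 * 32 : ℕ) : ℝ) ^ E, by positivity, fun a ha m hm => ?_⟩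
  calc v 2 / ((9 * 32 : ℕ) : ℝ) ^ E * (m : ℝ) ^ E
      ≤ v 2 / ((9 * 32 : ℕ) : ℝ) ^ E * ((m + 6 : ℕ) : ℝ) ^ E := by
        gcongr
        omega
    _ ≤ shiftedCount a 6 (m + 6) := by
        refine mul_rpow_le_of_geometric_growth (by norm_num) (by norm_num) hpos.le hE
          (fun n s hs => ?_) (by omega)
        rw [h32]
        exact pow_mul_le_shiftedCount ha (by linarith) heigen hanti hconvex hpos.le hone hs
    _ ≤ f (a ^ m) (a ^ 6) := by
        rw [shiftedCount, Nat.add_sub_cancel]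
        exact_mod_cast ncard_foldableSeqs_le_f (a ^ 6) (a ^ m)

theorem theorem3 (B : Matrix (Fin 3) (Fin 3) ℝ)
    (hB : B = (!![2, 1, 1; 2, 0, 1; 1, 1, 1] : Matrix (Fin 3) (Fin 3) ℝ) ^ 5 +
      !![0, 1, -1; 0, 1, -1; 0, 1, -1])
    (μ : ℝ) (hμroot : B.charpoly.IsRoot μ)
    (hμmax : ∀ x : ℝ, B.charpoly.IsRoot x → x ≤ μ) :
    ∀ a : ℕ, 2 ≤ a →
      ∃ C : ℝ, 0 < C ∧ ∃ M : ℕ, ∀ m : ℕ, M ≤ m →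
        C * (m : ℝ) ^ (1 + (1 / 5 : ℝ) * Real.logb 2 μ) ≤ (f (a ^ m) (a ^ 6) : ℝ) := by
  subst hB
  obtain ⟨C, hC, h⟩ := theorem3_general hμroot
  exact fun a ha => ⟨C, hC, 3, h a ha⟩
end

section
/- Let b ≥ 2 be an integer and let u = (u₁,…,uₙ) be a finite sequence of positive integers with uₙ ≥ 2. Set w = (u₁,…,uₙ₋₁, uₙ − 1, 1, b − 1, uₙ, uₙ₋₁,…,u₁) and w' = (u₁,…,uₙ₋₁, uₙ − 1, uₙ + 1, uₙ₋₁,…,u₁). Then ⟨w⟩ = b·⟨u⟩² and ⟨w'⟩ = ⟨u⟩². -/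
section Semiring

variable {R : Type*} [Semiring R]

/-- The product of the matrices `[[a, 1], [1, 0]]` over the entries `a` of a list. Its top-left
entry is the continuant of the list, and serves as the continuant over a general semiring. -/
def continuantMatrix (l : List R) : Matrix (Fin 2) (Fin 2) R :=
  (l.map fun a => !![a, 1; 1, 0]).prod

theorem continuantMatrix_nil : continuantMatrix ([] : List R) = 1 := rfl

theorem continuantMatrix_cons (a : R) (l : List R) :
    continuantMatrix (a :: l) = !![a, 1; 1, 0] * continuantMatrix l := by
  simp [continuantMatrix]

theorem continuantMatrix_append (l m : List R) :
    continuantMatrix (l ++ m) = continuantMatrix l * continuantMatrix m := by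
  simp [continuantMatrix]

theorem continuantMatrix_cons_cons_zero_zero (a b : R) (l : List R) :
    continuantMatrix (a :: b :: l) 0 0 =
      a * continuantMatrix (b :: l) 0 0 + continuantMatrix l 0 0 := by
  simp only [continuantMatrix_cons, Matrix.mul_apply, Fin.sum_univ_two]
  simp

theorem continuantMatrix_concat_zero_zero (l : List R) (a : R) :
    continuantMatrix (l ++ [a]) 0 0 = continuantMatrix l 0 0 * a + continuantMatrix l 0 1 := by
  simp [continuantMatrix_append, continuantMatrix_cons, continuantMatrix_nil, Matrix.mul_apply]

end Semiring

theorem continuant_eq_continuantMatrix_zero_zero (l : List ℕ) :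
    continuant l = continuantMatrix l 0 0 := by
  induction l using continuant.induct with
  | case1 => rfl
  | case2 a => simp [continuant, continuantMatrix_cons, continuantMatrix_nil]
  | case3 a b t ih_cons ih_tail =>
    rw [continuant, ih_cons, ih_tail, continuantMatrix_cons_cons_zero_zero]

section CommSemiring

variable {R : Type*} [CommSemiring R]

theorem continuantMatrix_reverse (l : List R) :
    continuantMatrix l.reverse = (continuantMatrix l).transpose := by
  have factor_symm (a : R) : (!![a, 1; 1, 0] : Matrix (Fin 2) (Fin 2) R).transpose =
      !![a, 1; 1, 0] := Matrix.eta_fin_two _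
  simp [continuantMatrix, Matrix.transpose_list_prod, Function.comp_def, factor_symm]

theorem continuantMatrix_append_append_reverse_zero_zero (v m : List R) :
    continuantMatrix (v ++ m ++ v.reverse) 0 0 =
      continuantMatrix m 0 0 * continuantMatrix v 0 0 ^ 2 +
        (continuantMatrix m 0 1 + continuantMatrix m 1 0) *
          (continuantMatrix v 0 0 * continuantMatrix v 0 1) +
        continuantMatrix m 1 1 * continuantMatrix v 0 1 ^ 2 := by
  simp only [continuantMatrix_append, continuantMatrix_reverse, Matrix.mul_apply,
    Matrix.transpose_apply, Fin.sum_univ_two]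
  ring

theorem continuantMatrix_append_append_reverse_eq_mul_sq (v : List R) {m : List R}
    {k s y z : R} (matrix_eq : continuantMatrix m = !![k * s ^ 2, y; z, k])
    (off_diag : y + z = 2 * k * s) :
    continuantMatrix (v ++ m ++ v.reverse) 0 0 = k * continuantMatrix (v ++ [s]) 0 0 ^ 2 := by
  rw [continuantMatrix_append_append_reverse_zero_zero, continuantMatrix_concat_zero_zero,
    matrix_eq]
  simp only [Matrix.of_apply, Matrix.cons_val', Matrix.cons_val_zero, Matrix.cons_val_one,
    Matrix.cons_val_fin_one, off_diag]
  ring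

/-- Here `x` and `c` stand for `uₙ - 1` and `b - 1`, so that no subtraction is needed. -/
theorem niederreiter_doubling_general (v : List R) (x c : R) :
    continuantMatrix (v ++ [x, 1, c, x + 1] ++ v.reverse) 0 0 =
      (c + 1) * continuantMatrix (v ++ [x + 1]) 0 0 ^ 2 ∧
    continuantMatrix (v ++ [x, x + 2] ++ v.reverse) 0 0 =
      continuantMatrix (v ++ [x + 1]) 0 0 ^ 2 := by
  have matrix_four : continuantMatrix [x, 1, c, x + 1] =
      !![(c + 1) * (x + 1) ^ 2, c * (x + 1) + x; (c + 1) * (x + 1) + 1, c + 1] := by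
    simp only [continuantMatrix_cons, continuantMatrix_nil, mul_one, Matrix.mul_fin_two]
    ring_nf
  have matrix_two : continuantMatrix [x, x + 2] = !![1 * (x + 1) ^ 2, x; x + 2, 1] := by
    simp only [continuantMatrix_cons, continuantMatrix_nil, mul_one, Matrix.mul_fin_two]
    ring_nf
  constructor
  · exact continuantMatrix_append_append_reverse_eq_mul_sq v matrix_four (by ring)
  · simpa only [one_mul] using
      continuantMatrix_append_append_reverse_eq_mul_sq v matrix_two (by ring)

end CommSemiring

theorem niederreiter_doubling (b : ℕ) (hb : 2 ≤ b)
    (v : List ℕ) (x : ℕ) (hx : 2 ≤ x) (hpos : ∀ y ∈ v ++ [x], 0 < y) :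
    continuant (v ++ [x - 1, 1, b - 1] ++ (v ++ [x]).reverse) =
      b * (continuant (v ++ [x])) ^ 2 ∧
    continuant (v ++ [x - 1, x + 1] ++ v.reverse) =
      (continuant (v ++ [x])) ^ 2 := by
  obtain ⟨y, rfl⟩ := Nat.exists_eq_add_of_le' (one_le_two.trans hx)
  obtain ⟨c, rfl⟩ := Nat.exists_eq_add_of_le' (one_le_two.trans hb)
  simpa [continuant_eq_continuantMatrix_zero_zero, add_assoc] using
    niederreiter_doubling_general v y c
end
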